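/- arXiv:1206.6598 — 2 statements merged into one kernel-verified Lean document; each statement's English description precedes it below -/
import Mathlib

section
/- Let ψ be a spherically symmetric solution of the wave equation on extremal Reissner–Nordström of mass M > 0. If (∂ᵣψ)(0, M) + (1/M)·ψ(0, M) ≠ 0, then it is NOT the case that both ψ(v, M) → 0 and (∂ᵣψ)(v, M) → 0 as v → +∞ (non-decay of the first transversal derivative along the extremal horizon). -/
/-! At the degenerate horizon both `D(M)` and `D'(M)` vanish, so the wave equation restricted
to `r = M` reads `∂ᵥ(∂ᵣψ + ψ / M) = 0`. Hence the Aretakis quantity `∂ᵣψ + ψ / M` is constant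
along the horizon (`aretakis_conserved`), which is incompatible with `ψ` and `∂ᵣψ` both tending
to zero there unless the constant is zero. -/

noncomputable section

open Real Set Filter

/-- Partial derivative in the first slot (`v`) of a function of two real variables. -/
def pv (u : ℝ → ℝ → ℝ) : ℝ → ℝ → ℝ := fun v r => deriv (fun t => u t r) v

/-- Partial derivative in the second slot (`r`) of a function of two real variables. -/
def pr (u : ℝ → ℝ → ℝ) : ℝ → ℝ → ℝ := fun v r => deriv (fun t => u v t) r

/-- The metric coefficient `D(r) = (1 − M/r)²` of extremal Reissner–Nordström of mass `M`. -/
def RN (M : ℝ) : ℝ → ℝ := fun r => (1 - M / r) ^ 2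

/-- A spherically symmetric solution of the wave equation on extremal
Reissner–Nordström of mass `M`: a smooth function `ψ(v,r)` on `ℝ × (0,∞)` with
`D(r)·∂ᵣ²ψ + 2·∂ᵥ∂ᵣψ + (2/r)·∂ᵥψ + (D'(r) + 2D(r)/r)·∂ᵣψ = 0`. -/
def IsRNSphericalWaveSol (M : ℝ) (ψ : ℝ → ℝ → ℝ) : Prop :=
  ContDiffOn ℝ (⊤ : ℕ∞) (fun p : ℝ × ℝ => ψ p.1 p.2) (univ ×ˢ Ioi 0) ∧
  ∀ v : ℝ, ∀ r ∈ Ioi (0 : ℝ),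
    RN M r * pr (pr ψ) v r + 2 * pv (pr ψ) v r + (2 / r) * pv ψ v r
      + (deriv (RN M) r + 2 * RN M r / r) * pr ψ v r = 0

lemma RN_horizon {M : ℝ} (hM : 0 < M) : RN M M = 0 := by
  simp [RN, hM.ne']

/-- The horizon is extremal: `D` has a double zero at `r = M`. -/
lemma deriv_RN_horizon {M : ℝ} (hM : 0 < M) : deriv (RN M) M = 0 := by
  have h : HasDerivAt (fun r : ℝ => 1 - M / r) (-(M * (-(M ^ 2)⁻¹))) M := by
    simpa [div_eq_mul_inv] using ((hasDerivAt_inv hM.ne').const_mul M).const_sub 1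
  have h2 := h.pow 2
  have : deriv (RN M) M = _ := h2.deriv
  rw [this]
  simp [hM.ne']

lemma differentiable_along_horizon {M : ℝ} (hM : 0 < M) {ψ : ℝ → ℝ → ℝ}
    (h : ContDiffOn ℝ (⊤ : ℕ∞) (fun p : ℝ × ℝ => ψ p.1 p.2) (univ ×ˢ Ioi 0)) :
    Differentiable ℝ (fun v => ψ v M) ∧ Differentiable ℝ (fun v => pr ψ v M) := by
  have hat : ∀ v, ContDiffAt ℝ (⊤ : ℕ∞) (fun p : ℝ × ℝ => ψ p.1 p.2) (v, M) := fun v =>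
    h.contDiffAt ((isOpen_univ.prod isOpen_Ioi).mem_nhds ⟨mem_univ _, hM⟩)
  have hdiff : ∀ v, DifferentiableAt ℝ (fun p : ℝ × ℝ => ψ p.1 p.2) (v, M) := fun v =>
    (hat v).differentiableAt (by simp)
  have hline : Differentiable ℝ (fun v : ℝ => (v, M)) := by fun_prop
  refine ⟨fun v => DifferentiableAt.comp (g := fun p : ℝ × ℝ => ψ p.1 p.2) v (hdiff v) (hline v), ?_⟩
  have heq : (fun v => pr ψ v M) =
      fun v => fderiv ℝ (fun p : ℝ × ℝ => ψ p.1 p.2) (v, M) (0, 1) := by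
    funext v
    have hl : HasDerivAt (fun t : ℝ => (v, t)) ((0 : ℝ), (1 : ℝ)) M :=
      (hasDerivAt_const M v).prodMk (hasDerivAt_id M)
    exact ((hdiff v).hasFDerivAt.comp_hasDerivAt M hl).deriv
  rw [heq]
  intro v
  have hf : DifferentiableAt ℝ (fderiv ℝ (fun p : ℝ × ℝ => ψ p.1 p.2)) (v, M) :=
    ((hat v).fderiv_right (m := 1) (WithTop.coe_le_coe.2 (le_top : (1 + 1 : ℕ∞) ≤ ⊤))).differentiableAt (by simp)
  exact (hf.comp v (hline v)).clm_apply (differentiableAt_const _)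

/-- The Aretakis conservation law along the horizon `r = M`. -/
lemma aretakis_conserved {M : ℝ} (hM : 0 < M) {ψ : ℝ → ℝ → ℝ}
    (hψ : IsRNSphericalWaveSol M ψ) (v : ℝ) :
    pr ψ v M + (1 / M) * ψ v M = pr ψ 0 M + (1 / M) * ψ 0 M := by
  obtain ⟨h1, h2⟩ := differentiable_along_horizon hM hψ.1
  refine is_const_of_deriv_eq_zero (f := fun v => pr ψ v M + (1 / M) * ψ v M)
    (h2.add (h1.const_mul _)) (fun w => ?_) v 0
  have hw := hψ.2 w M hM
  rw [RN_horizon hM, deriv_RN_horizon hM] at hw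
  have hd := ((h2 w).hasDerivAt.add ((h1 w).hasDerivAt.const_mul (1 / M))).deriv
  refine hd.trans ?_
  change pv (pr ψ) w M + 1 / M * pv ψ w M = 0
  linear_combination hw / 2

/-- **Non-decay of the first transversal derivative along the extremal
Reissner–Nordström horizon.** If the Aretakis constant
`(∂ᵣψ)(0, M) + (1/M)·ψ(0, M)` is nonzero, then it is not the case that both
`ψ(v, M) → 0` and `(∂ᵣψ)(v, M) → 0` as `v → +∞`. -/
theorem nondecay_transversal_derivative_extremal_RN
    (M : ℝ) (hM : 0 < M) (ψ : ℝ → ℝ → ℝ) (hψ : IsRNSphericalWaveSol M ψ)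
    (hH : pr ψ 0 M + (1 / M) * ψ 0 M ≠ 0) :
    ¬ (Tendsto (fun v => ψ v M) atTop (nhds 0) ∧
        Tendsto (fun v => pr ψ v M) atTop (nhds 0)) := by
  rintro ⟨h1, h2⟩
  have h := h2.add (h1.const_mul (1 / M))
  simp only [aretakis_conserved hM hψ] at h
  exact hH (by simpa using tendsto_nhds_unique tendsto_const_nhds h)
end
end

section
/- Let ψ be an axisymmetric solution of the wave equation on extremal Kerr of mass M > 0, and let E₁ : (0,π) → ℝ be smooth, bounded with bounded first derivative, satisfying (1/sinθ)·(sinθ·E₁'(θ))' = −2·E₁(θ) (an l = 1 axisymmetric spherical harmonic, e.g. E₁(θ) = cosθ). Then the function v ↦ ∫₀^π (M²sin²θ·∂ᵥ∂ᵣψ + 4M²·∂ᵣ²ψ + 6M·∂ᵣψ + 2ψ)(v, M, θ)·E₁(θ)·sinθ dθ is constant on ℝ (the l = 1 conserved quantity along the extremal Kerr horizon). -/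
/-!
Write `F(v, θ)` for the integrand. Differentiating the axisymmetric wave equation in `r` and
setting `r = M` kills the higher `r`-derivatives, because `Δ = (r - M)²` has a double zero, and
leaves (`wave_deriv_horizon`)
`∂ᵥ(M² sin²θ ∂ᵥ∂ᵣψ + 4M² ∂ᵣ²ψ + 6M ∂ᵣψ + 2ψ) = -(2 ∂ᵣψ + Δ_{S²} ∂ᵣψ)`.
Multiplied by `E₁ sin θ`, with `Δ_{S²} E₁ = -2 E₁`, the right side is the exact `θ`-derivative of
the flux `sin θ (∂ᵣψ E₁' - ∂θ∂ᵣψ E₁)`. All factors other than `sin θ` are bounded, so the flux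
vanishes at both poles and `∫ ∂ᵥF dθ = 0` (`integral_deriv_eq_zero`). The bounds on third
derivatives of `ψ` dominate `∂ᵥF`, which permits differentiation under the integral sign; the
integral therefore has zero derivative in `v`. The exchange of partial derivatives rests on
identifying `pder` with components of the Fréchet derivative on the open coordinate domain.
-/

noncomputable section

open Real Set Filter

/-- Partial derivative of a function of four real variables `(v, r, θ, φ)` in the
direction indexed by `μ` (`0 = v`, `1 = r`, `2 = θ`, `3 = φ`). -/
def pder (μ : Fin 4) (f : ℝ → ℝ → ℝ → ℝ → ℝ) : ℝ → ℝ → ℝ → ℝ → ℝ :=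
  fun v r θ φ =>
    if μ = 0 then deriv (fun t => f t r θ φ) v
    else if μ = 1 then deriv (fun t => f v t θ φ) r
    else if μ = 2 then deriv (fun t => f v r t φ) θ
    else deriv (fun t => f v r θ t) φ

/-- The extremal Kerr wave operator `ρ²·□_g ψ` of mass `M`, in ingoing
Eddington–Finkelstein coordinates `(v, r, θ, φ)`, with `Δ(r) = (r−M)²`. -/
def kerrWaveOp (M : ℝ) (ψ : ℝ → ℝ → ℝ → ℝ → ℝ) (v r θ φ : ℝ) : ℝ :=
  M ^ 2 * sin θ ^ 2 * pder 0 (pder 0 ψ) v r θ φ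
    + 2 * (r ^ 2 + M ^ 2) * pder 0 (pder 1 ψ) v r θ φ
    + (r - M) ^ 2 * pder 1 (pder 1 ψ) v r θ φ
    + 2 * M * pder 0 (pder 3 ψ) v r θ φ
    + 2 * M * pder 1 (pder 3 ψ) v r θ φ
    + 2 * r * pder 0 ψ v r θ φ
    + 2 * (r - M) * pder 1 ψ v r θ φ
    + deriv (fun t => sin t * pder 2 ψ v r t φ) θ / sin θ
    + pder 3 (pder 3 ψ) v r θ φ / sin θ ^ 2

/-- A solution of the wave equation on extremal Kerr of mass `M`: a smooth function
`ψ(v,r,θ,φ)` on `ℝ × (0,∞) × (0,π) × ℝ`, `2π`-periodic in `φ`, with all partial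
derivatives up to third order bounded, satisfying `ρ²·□_g ψ = 0`. -/
structure IsKerrWaveSol (M : ℝ) (ψ : ℝ → ℝ → ℝ → ℝ → ℝ) : Prop where
  smooth : ContDiffOn ℝ (⊤ : ℕ∞) (fun p : ℝ × ℝ × ℝ × ℝ => ψ p.1 p.2.1 p.2.2.1 p.2.2.2)
    (univ ×ˢ Ioi 0 ×ˢ Ioo 0 π ×ˢ univ)
  periodic : ∀ v r θ φ, ψ v r θ (φ + 2 * π) = ψ v r θ φ
  bounded : ∃ C : ℝ, ∀ L : List (Fin 4), L.length ≤ 3 →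
    ∀ v : ℝ, ∀ r ∈ Ioi (0 : ℝ), ∀ θ ∈ Ioo 0 π, ∀ φ : ℝ,
      |(L.foldr pder ψ) v r θ φ| ≤ C
  wave : ∀ v : ℝ, ∀ r ∈ Ioi (0 : ℝ), ∀ θ ∈ Ioo 0 π, ∀ φ : ℝ,
    kerrWaveOp M ψ v r θ φ = 0

/-- The conserved quantity `H₀[ψ]` along the extremal Kerr horizon `{r = M}`. -/
def H0Kerr (M : ℝ) (ψ : ℝ → ℝ → ℝ → ℝ → ℝ) : ℝ :=
  ∫ φ in (0:ℝ)..(2 * π), ∫ θ in (0:ℝ)..π,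
    (M * sin θ ^ 2 * pder 0 ψ 0 M θ φ + 4 * M * pder 1 ψ 0 M θ φ + 2 * ψ 0 M θ φ) * sin θ

/-! ### Calculus of coordinate partial derivatives -/

/-- The coordinate domain `ℝ × (0,∞) × (0,π) × ℝ`. -/
def kerrDom : Set (ℝ × ℝ × ℝ × ℝ) := univ ×ˢ Ioi 0 ×ˢ Ioo 0 π ×ˢ univ

/-- The function on `ℝ × ℝ × ℝ × ℝ` associated with a curried function. -/
def unc (f : ℝ → ℝ → ℝ → ℝ → ℝ) : ℝ × ℝ × ℝ × ℝ → ℝ :=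
  fun p => f p.1 p.2.1 p.2.2.1 p.2.2.2

/-- Smoothness of a curried function on the coordinate domain. -/
def SmoothDom (f : ℝ → ℝ → ℝ → ℝ → ℝ) : Prop := ContDiffOn ℝ (⊤ : ℕ∞) (unc f) kerrDom

/-- The `μ`-th coordinate vector. -/
def coordVec (μ : Fin 4) : ℝ × ℝ × ℝ × ℝ :=
  if μ = 0 then (1, 0, 0, 0) else if μ = 1 then (0, 1, 0, 0)
  else if μ = 2 then (0, 0, 1, 0) else (0, 0, 0, 1)

lemma isOpen_kerrDom : IsOpen kerrDom :=
  isOpen_univ.prod (isOpen_Ioi.prod (isOpen_Ioo.prod isOpen_univ))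

lemma mem_kerrDom {v r θ φ : ℝ} (hr : 0 < r) (hθ : θ ∈ Ioo 0 π) : (v, r, θ, φ) ∈ kerrDom :=
  ⟨mem_univ _, hr, hθ, mem_univ _⟩

lemma SmoothDom.hasFDerivAt {f : ℝ → ℝ → ℝ → ℝ → ℝ} (hf : SmoothDom f) {p : ℝ × ℝ × ℝ × ℝ}
    (hp : p ∈ kerrDom) : HasFDerivAt (unc f) (fderiv ℝ (unc f) p) p :=
  ((ContDiffOn.contDiffAt hf (isOpen_kerrDom.mem_nhds hp)).differentiableAt
    (by simp)).hasFDerivAt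

section slices

variable {f : ℝ → ℝ → ℝ → ℝ → ℝ} {v r θ φ : ℝ}

lemma hasDerivAt_slice0 (hf : SmoothDom f) (hp : (v, r, θ, φ) ∈ kerrDom) :
    HasDerivAt (fun t => f t r θ φ) (fderiv ℝ (unc f) (v, r, θ, φ) (coordVec 0)) v := by
  have h1 : HasDerivAt (fun t : ℝ => (t, r, θ, φ)) ((1, 0, 0, 0) : ℝ × ℝ × ℝ × ℝ) v :=
    (hasDerivAt_id v).prodMk (hasDerivAt_const v (r, θ, φ))
  exact (hf.hasFDerivAt hp).comp_hasDerivAt v h1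

lemma hasDerivAt_slice1 (hf : SmoothDom f) (hp : (v, r, θ, φ) ∈ kerrDom) :
    HasDerivAt (fun t => f v t θ φ) (fderiv ℝ (unc f) (v, r, θ, φ) (coordVec 1)) r := by
  have h1 : HasDerivAt (fun t : ℝ => (v, t, θ, φ)) ((0, 1, 0, 0) : ℝ × ℝ × ℝ × ℝ) r :=
    (hasDerivAt_const r v).prodMk ((hasDerivAt_id r).prodMk (hasDerivAt_const r (θ, φ)))
  exact (hf.hasFDerivAt hp).comp_hasDerivAt r h1

lemma hasDerivAt_slice2 (hf : SmoothDom f) (hp : (v, r, θ, φ) ∈ kerrDom) :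
    HasDerivAt (fun t => f v r t φ) (fderiv ℝ (unc f) (v, r, θ, φ) (coordVec 2)) θ := by
  have h1 : HasDerivAt (fun t : ℝ => (v, r, t, φ)) ((0, 0, 1, 0) : ℝ × ℝ × ℝ × ℝ) θ :=
    (hasDerivAt_const θ v).prodMk ((hasDerivAt_const θ r).prodMk
      ((hasDerivAt_id θ).prodMk (hasDerivAt_const θ φ)))
  exact (hf.hasFDerivAt hp).comp_hasDerivAt θ h1

lemma hasDerivAt_slice3 (hf : SmoothDom f) (hp : (v, r, θ, φ) ∈ kerrDom) :
    HasDerivAt (fun t => f v r θ t) (fderiv ℝ (unc f) (v, r, θ, φ) (coordVec 3)) φ := by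
  have h1 : HasDerivAt (fun t : ℝ => (v, r, θ, t)) ((0, 0, 0, 1) : ℝ × ℝ × ℝ × ℝ) φ :=
    (hasDerivAt_const φ v).prodMk ((hasDerivAt_const φ r).prodMk
      ((hasDerivAt_const φ θ).prodMk (hasDerivAt_id φ)))
  exact (hf.hasFDerivAt hp).comp_hasDerivAt φ h1

lemma pder_eq_fderiv (hf : SmoothDom f) (μ : Fin 4) (hp : (v, r, θ, φ) ∈ kerrDom) :
    pder μ f v r θ φ = fderiv ℝ (unc f) (v, r, θ, φ) (coordVec μ) := by
  fin_cases μ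
  · exact (hasDerivAt_slice0 hf hp).deriv
  · exact (hasDerivAt_slice1 hf hp).deriv
  · exact (hasDerivAt_slice2 hf hp).deriv
  · exact (hasDerivAt_slice3 hf hp).deriv

lemma SmoothDom.hasDerivAt0 (hf : SmoothDom f) (hp : (v, r, θ, φ) ∈ kerrDom) :
    HasDerivAt (fun t => f t r θ φ) (pder 0 f v r θ φ) v := by
  rw [pder_eq_fderiv hf 0 hp]; exact hasDerivAt_slice0 hf hp

lemma SmoothDom.hasDerivAt1 (hf : SmoothDom f) (hp : (v, r, θ, φ) ∈ kerrDom) :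
    HasDerivAt (fun t => f v t θ φ) (pder 1 f v r θ φ) r := by
  rw [pder_eq_fderiv hf 1 hp]; exact hasDerivAt_slice1 hf hp

lemma SmoothDom.hasDerivAt2 (hf : SmoothDom f) (hp : (v, r, θ, φ) ∈ kerrDom) :
    HasDerivAt (fun t => f v r t φ) (pder 2 f v r θ φ) θ := by
  rw [pder_eq_fderiv hf 2 hp]; exact hasDerivAt_slice2 hf hp

end slices

lemma unc_pder_eqOn {f : ℝ → ℝ → ℝ → ℝ → ℝ} (hf : SmoothDom f) (μ : Fin 4) :
    EqOn (unc (pder μ f)) (fun p => fderiv ℝ (unc f) p (coordVec μ)) kerrDom :=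
  fun _ hp => pder_eq_fderiv hf μ hp

lemma SmoothDom.pder {f : ℝ → ℝ → ℝ → ℝ → ℝ} (hf : SmoothDom f) (μ : Fin 4) :
    SmoothDom (pder μ f) := by
  have h : ContDiffOn ℝ (⊤ : ℕ∞) (fderiv ℝ (unc f)) kerrDom :=
    ContDiffOn.fderiv_of_isOpen hf isOpen_kerrDom (by simp)
  exact (h.clm_apply contDiffOn_const).congr (unc_pder_eqOn hf μ)

lemma pder_comm {f : ℝ → ℝ → ℝ → ℝ → ℝ} (hf : SmoothDom f) (μ ν : Fin 4) {v r θ φ : ℝ}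
    (hp : (v, r, θ, φ) ∈ kerrDom) :
    pder μ (pder ν f) v r θ φ = pder ν (pder μ f) v r θ φ := by
  have hat := ContDiffOn.contDiffAt hf (isOpen_kerrDom.mem_nhds hp)
  have hd : DifferentiableAt ℝ (fderiv ℝ (unc f)) (v, r, θ, φ) :=
    (hat.fderiv_right (m := 1) (by norm_cast)).differentiableAt (by simp)
  have key : ∀ α β : Fin 4, pder α (pder β f) v r θ φ =
      fderiv ℝ (fderiv ℝ (unc f)) (v, r, θ, φ) (coordVec α) (coordVec β) := by
    intro α β
    rw [pder_eq_fderiv (hf.pder β) α hp,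
      ((unc_pder_eqOn hf β).eventuallyEq_of_mem (isOpen_kerrDom.mem_nhds hp)).fderiv_eq,
      fderiv_clm_apply hd (differentiableAt_const _)]
    simp
  rw [key, key]
  exact (hat.isSymmSndFDerivAt (by
    rw [minSmoothness_of_isRCLikeNormedField]
    exact WithTop.coe_le_coe.2 (le_top : (2 : ℕ∞) ≤ ⊤))) _ _

/-- `pder μ` only depends on the values of a function on the (open) coordinate domain. -/
lemma pder_congr {f g : ℝ → ℝ → ℝ → ℝ → ℝ} (hf : SmoothDom f) (hg : SmoothDom g) (μ : Fin 4)
    (h : EqOn (unc f) (unc g) kerrDom) {v r θ φ : ℝ} (hp : (v, r, θ, φ) ∈ kerrDom) :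
    pder μ f v r θ φ = pder μ g v r θ φ := by
  rw [pder_eq_fderiv hf μ hp, pder_eq_fderiv hg μ hp,
    (h.eventuallyEq_of_mem (isOpen_kerrDom.mem_nhds hp)).fderiv_eq]

lemma pder_pder_comm {f : ℝ → ℝ → ℝ → ℝ → ℝ} (hf : SmoothDom f) (μ ν κ : Fin 4) {v r θ φ : ℝ}
    (hp : (v, r, θ, φ) ∈ kerrDom) :
    pder κ (pder μ (pder ν f)) v r θ φ = pder μ (pder ν (pder κ f)) v r θ φ := by
  rw [pder_comm (hf.pder ν) κ μ hp]
  exact pder_congr ((hf.pder ν).pder κ) ((hf.pder κ).pder ν) μ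
    (fun _ hq => pder_comm hf κ ν hq) hp

lemma SmoothDom.continuousOn_theta {f : ℝ → ℝ → ℝ → ℝ → ℝ} (hf : SmoothDom f) {v r φ : ℝ}
    (hr : 0 < r) : ContinuousOn (fun θ => f v r θ φ) (Ioo 0 π) := fun _ hθ =>
  (hf.hasDerivAt2 (mem_kerrDom hr hθ)).continuousAt.continuousWithinAt

/-! ### The wave equation on the horizon -/

/-- The `r`-derivative, times `sin θ`, of the axisymmetric wave equation at `r = M`, where the
terms in `∂ᵣ³ψ` and `∂ᵣ²ψ` drop out because `Δ = (r - M)²` has a double zero. -/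
lemma wave_deriv_horizon {M : ℝ} (hM : 0 < M) {ψ : ℝ → ℝ → ℝ → ℝ → ℝ}
    (hψ : IsKerrWaveSol M ψ) (haxi : ∀ v r θ φ, pder 3 ψ v r θ φ = 0)
    (v : ℝ) {θ : ℝ} (hθ : θ ∈ Ioo 0 π) :
    (M ^ 2 * sin θ ^ 2 * pder 0 (pder 0 (pder 1 ψ)) v M θ 0
      + 4 * M ^ 2 * pder 0 (pder 1 (pder 1 ψ)) v M θ 0
      + 6 * M * pder 0 (pder 1 ψ) v M θ 0 + 2 * pder 0 ψ v M θ 0) * sin θ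
      = -(2 * pder 1 ψ v M θ 0 * sin θ + pder 2 (pder 2 (pder 1 ψ)) v M θ 0 * sin θ
        + pder 2 (pder 1 ψ) v M θ 0 * cos θ) := by
  have hs : SmoothDom ψ := hψ.smooth
  have hsin : sin θ ≠ 0 := (sin_pos_of_mem_Ioo hθ).ne'
  have hp : (v, M, θ, (0 : ℝ)) ∈ kerrDom := mem_kerrDom hM hθ
  have h3 : pder 3 ψ = fun _ _ _ _ => 0 := by
    funext a b c d; exact haxi a b c d
  have hz : ∀ μ v r θ φ, pder μ (fun _ _ _ _ => (0 : ℝ)) v r θ φ = 0 := by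
    intro μ v r θ φ; simp [pder]
  have hwave : ∀ r : ℝ, 0 < r →
      M ^ 2 * sin θ ^ 2 * pder 0 (pder 0 ψ) v r θ 0
      + 2 * (r ^ 2 + M ^ 2) * pder 0 (pder 1 ψ) v r θ 0
      + (r - M) ^ 2 * pder 1 (pder 1 ψ) v r θ 0
      + 2 * r * pder 0 ψ v r θ 0
      + 2 * (r - M) * pder 1 ψ v r θ 0
      + (cos θ / sin θ * pder 2 ψ v r θ 0 + pder 2 (pder 2 ψ) v r θ 0) = 0 := by
    intro r hr
    have h := hψ.wave v r hr θ hθ 0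
    have hd : deriv (fun t => sin t * pder 2 ψ v r t 0) θ =
        cos θ * pder 2 ψ v r θ 0 + sin θ * pder 2 (pder 2 ψ) v r θ 0 :=
      ((hasDerivAt_sin θ).mul ((hs.pder 2).hasDerivAt2 (mem_kerrDom hr hθ))).deriv
    simp only [kerrWaveOp, h3, hz, hd] at h
    rw [add_div, mul_div_cancel_left₀ _ hsin] at h
    linear_combination h
  have hid := hasDerivAt_id' M
  have hder := (((((((hs.pder 0).pder 0).hasDerivAt1 hp).const_mul (M ^ 2 * sin θ ^ 2)).add
    ((((hid.pow 2).add_const (M ^ 2)).const_mul 2).mul (((hs.pder 1).pder 0).hasDerivAt1 hp))).add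
    (((hid.sub_const M).pow 2).mul (((hs.pder 1).pder 1).hasDerivAt1 hp))).add
    ((hid.const_mul 2).mul ((hs.pder 0).hasDerivAt1 hp))).add
    (((hid.sub_const M).const_mul 2).mul ((hs.pder 1).hasDerivAt1 hp))
  have hder' := hder.add ((((hs.pder 2).hasDerivAt1 hp).const_mul (cos θ / sin θ)).add
    (((hs.pder 2).pder 2).hasDerivAt1 hp))
  have h0 := hder'.unique ((hasDerivAt_const M (0 : ℝ)).congr_of_eventuallyEq
    (Filter.eventuallyEq_of_mem (Ioi_mem_nhds hM) (fun r hr => hwave r hr)))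
  rw [pder_pder_comm hs 0 0 1 hp, pder_pder_comm hs 0 1 1 hp, pder_pder_comm hs 2 2 1 hp,
    pder_comm hs 1 0 hp, pder_comm hs 1 2 hp] at h0
  simp at h0
  field_simp at h0
  linear_combination h0

/-! ### Conservation -/

lemma integrableOn_Ioo_of_bound {g : ℝ → ℝ} {C : ℝ} (hg : ContinuousOn g (Ioo 0 π))
    (hb : ∀ θ ∈ Ioo 0 π, |g θ| ≤ C) :
    MeasureTheory.IntegrableOn g (Ioo 0 π) :=
  MeasureTheory.Integrable.of_bound (hg.aestronglyMeasurable measurableSet_Ioo) C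
    ((MeasureTheory.ae_restrict_iff' measurableSet_Ioo).2 (.of_forall hb))

/-- A flux `W` bounded by a multiple of `sin θ` vanishes at the poles, so the integral of its
derivative is zero. It is applied to `W = sin θ (f E' - f' E)` with `f, f', E, E'` bounded. -/
lemma integral_deriv_eq_zero {W g : ℝ → ℝ} {C D : ℝ}
    (hW : ∀ θ ∈ Ioo 0 π, HasDerivAt W (g θ) θ) (hWb : ∀ θ ∈ Ioo 0 π, |W θ| ≤ C * sin θ)
    (hg : ContinuousOn g (Ioo 0 π)) (hgb : ∀ θ ∈ Ioo 0 π, |g θ| ≤ D) :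
    ∫ θ in Ioo 0 π, g θ = 0 := by
  have hlim : ∀ a : ℝ, sin a = 0 → Tendsto W (nhdsWithin a (Ioo 0 π)) (nhds 0) := by
    intro a ha
    refine squeeze_zero_norm' (a := fun θ => C * sin θ)
      (eventually_mem_nhdsWithin.mono fun θ hθ => hWb θ hθ) ?_
    have : Tendsto (fun θ => C * sin θ) (nhds a) (nhds (C * sin a)) :=
      (continuous_const.mul continuous_sin).tendsto a
    rw [ha, mul_zero] at this
    exact this.mono_left nhdsWithin_le_nhds
  have h0 := hlim 0 sin_zero
  have hπ := hlim π sin_pi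
  rw [nhdsWithin_Ioo_eq_nhdsGT pi_pos] at h0
  rw [nhdsWithin_Ioo_eq_nhdsLT pi_pos] at hπ
  have := intervalIntegral.integral_eq_sub_of_hasDerivAt_of_tendsto pi_pos hW
    ((intervalIntegrable_iff_integrableOn_Ioo_of_le pi_pos.le).2
      (integrableOn_Ioo_of_bound hg hgb)) h0 hπ
  rw [intervalIntegral.integral_of_le pi_pos.le, MeasureTheory.integral_Ioc_eq_integral_Ioo,
    sub_zero] at this
  exact this

/-- **The `l = 1` conserved quantity along the extremal Kerr horizon.** For every
axisymmetric solution `ψ` of the wave equation on extremal Kerr of mass `M > 0` and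
every bounded smooth `l = 1` axisymmetric spherical harmonic `E₁` with bounded first
derivative, the function
`v ↦ ∫₀^π (M² sin²θ ∂ᵥ∂ᵣψ + 4M² ∂ᵣ²ψ + 6M ∂ᵣψ + 2ψ)(v, M, θ)·E₁(θ)·sinθ dθ`
is constant on `ℝ`. -/
theorem l_one_conserved_quantity_extremal_Kerr
    (M : ℝ) (hM : 0 < M) (ψ : ℝ → ℝ → ℝ → ℝ → ℝ) (hψ : IsKerrWaveSol M ψ)
    (haxi : ∀ v r θ φ, pder 3 ψ v r θ φ = 0)
    (E₁ : ℝ → ℝ) (hE₁smooth : ContDiffOn ℝ (⊤ : ℕ∞) E₁ (Ioo 0 π))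
    (hE₁bdd : ∃ C : ℝ, ∀ θ ∈ Ioo (0:ℝ) π, |E₁ θ| ≤ C ∧ |deriv E₁ θ| ≤ C)
    (hE₁eigen : ∀ θ ∈ Ioo (0:ℝ) π, deriv (fun t => sin t * deriv E₁ t) θ / sin θ = -2 * E₁ θ) :
    ∀ v₁ v₂ : ℝ,
      (∫ θ in (0:ℝ)..π,
        (M ^ 2 * sin θ ^ 2 * pder 0 (pder 1 ψ) v₁ M θ 0 + 4 * M ^ 2 * pder 1 (pder 1 ψ) v₁ M θ 0
          + 6 * M * pder 1 ψ v₁ M θ 0 + 2 * ψ v₁ M θ 0) * E₁ θ * sin θ)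
        = ∫ θ in (0:ℝ)..π,
        (M ^ 2 * sin θ ^ 2 * pder 0 (pder 1 ψ) v₂ M θ 0 + 4 * M ^ 2 * pder 1 (pder 1 ψ) v₂ M θ 0
          + 6 * M * pder 1 ψ v₂ M θ 0 + 2 * ψ v₂ M θ 0) * E₁ θ * sin θ := by
  have hs : SmoothDom ψ := hψ.smooth
  obtain ⟨C, hC⟩ := hψ.bounded
  obtain ⟨K, hK⟩ := hE₁bdd
  have hEd : ∀ θ ∈ Ioo (0:ℝ) π, HasDerivAt E₁ (deriv E₁ θ) θ := fun θ hθ =>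
    ((hE₁smooth.contDiffAt (isOpen_Ioo.mem_nhds hθ)).differentiableAt (by simp)).hasDerivAt
  have hEd2 : ∀ θ ∈ Ioo (0:ℝ) π,
      HasDerivAt (fun t => sin t * deriv E₁ t) (-2 * E₁ θ * sin θ) θ := by
    intro θ hθ
    have hsin : sin θ ≠ 0 := (sin_pos_of_mem_Ioo hθ).ne'
    have h1 : ContDiffOn ℝ (⊤ : ℕ∞) (deriv E₁) (Ioo 0 π) :=
      hE₁smooth.deriv_of_isOpen isOpen_Ioo (by simp)
    have h2 : DifferentiableAt ℝ (deriv E₁) θ :=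
      (h1.contDiffAt (isOpen_Ioo.mem_nhds hθ)).differentiableAt (by simp)
    rw [← hE₁eigen θ hθ, div_mul_cancel₀ _ hsin]
    exact (differentiable_sin.differentiableAt.mul h2).hasDerivAt
  have hEc : ContinuousOn E₁ (Ioo 0 π) := hE₁smooth.continuousOn
  set F : ℝ → ℝ → ℝ := fun v θ =>
    (M ^ 2 * sin θ ^ 2 * pder 0 (pder 1 ψ) v M θ 0 + 4 * M ^ 2 * pder 1 (pder 1 ψ) v M θ 0
          + 6 * M * pder 1 ψ v M θ 0 + 2 * ψ v M θ 0) * E₁ θ * sin θ with hF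
  set Fv : ℝ → ℝ → ℝ := fun v θ =>
    (M ^ 2 * sin θ ^ 2 * pder 0 (pder 0 (pder 1 ψ)) v M θ 0
      + 4 * M ^ 2 * pder 0 (pder 1 (pder 1 ψ)) v M θ 0
      + 6 * M * pder 0 (pder 1 ψ) v M θ 0 + 2 * pder 0 ψ v M θ 0) * E₁ θ * sin θ with hFv
  -- Both `F` and `Fv` have the same shape, with coefficients bounded by `C`.
  have hbound : ∀ a b c d θ : ℝ, |a| ≤ C → |b| ≤ C → |c| ≤ C → |d| ≤ C → θ ∈ Ioo (0:ℝ) π →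
      |(M ^ 2 * sin θ ^ 2 * a + 4 * M ^ 2 * b + 6 * M * c + 2 * d) * E₁ θ * sin θ|
        ≤ (M ^ 2 * C + 4 * M ^ 2 * C + 6 * M * C + 2 * C) * K := by
    intro a b c d θ ha hb hc hd hθ
    have hC0 : 0 ≤ C := (abs_nonneg a).trans ha
    have hsq : sin θ ^ 2 ≤ 1 := sin_sq_le_one θ
    have h1 : |M ^ 2 * sin θ ^ 2 * a + 4 * M ^ 2 * b + 6 * M * c + 2 * d|
        ≤ M ^ 2 * C + 4 * M ^ 2 * C + 6 * M * C + 2 * C := by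
      refine (abs_add_le _ _).trans (add_le_add ((abs_add_le _ _).trans
        (add_le_add ((abs_add_le _ _).trans (add_le_add ?_ ?_)) ?_)) ?_)
      · rw [abs_mul, abs_of_nonneg (by positivity : 0 ≤ M ^ 2 * sin θ ^ 2)]
        have : M ^ 2 * sin θ ^ 2 ≤ M ^ 2 := mul_le_of_le_one_right (by positivity) hsq
        gcongr
      · rw [abs_mul, abs_of_nonneg (by positivity : 0 ≤ 4 * M ^ 2)]; gcongr
      · rw [abs_mul, abs_of_nonneg (by positivity : 0 ≤ 6 * M)]; gcongr
      · rw [abs_mul, abs_of_nonneg (by positivity : (0:ℝ) ≤ 2)]; gcongr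
    rw [abs_mul, abs_mul]
    refine (mul_le_of_le_one_right (by positivity) (abs_sin_le_one θ)).trans ?_
    exact mul_le_mul h1 (hK θ hθ).1 (abs_nonneg _) (by positivity)
  have hcont : ∀ {a b c d : ℝ → ℝ → ℝ → ℝ → ℝ}, SmoothDom a → SmoothDom b → SmoothDom c →
      SmoothDom d → ∀ v : ℝ, ContinuousOn (fun θ => (M ^ 2 * sin θ ^ 2 * a v M θ 0
        + 4 * M ^ 2 * b v M θ 0 + 6 * M * c v M θ 0 + 2 * d v M θ 0) * E₁ θ * sin θ)
        (Ioo 0 π) := by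
    intro a b c d ha hb hc hd v
    have ha' := ha.continuousOn_theta (v := v) (φ := 0) hM
    have hb' := hb.continuousOn_theta (v := v) (φ := 0) hM
    have hc' := hc.continuousOn_theta (v := v) (φ := 0) hM
    have hd' := hd.continuousOn_theta (v := v) (φ := 0) hM
    fun_prop
  have hFc : ∀ v, ContinuousOn (F v) (Ioo 0 π) :=
    hcont ((hs.pder 1).pder 0) ((hs.pder 1).pder 1) (hs.pder 1) hs
  have hFvc : ∀ v, ContinuousOn (Fv v) (Ioo 0 π) :=
    hcont (((hs.pder 1).pder 0).pder 0) (((hs.pder 1).pder 1).pder 0) ((hs.pder 1).pder 0)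
      (hs.pder 0)
  have hFb : ∀ v, ∀ θ ∈ Ioo (0:ℝ) π,
      |F v θ| ≤ (M ^ 2 * C + 4 * M ^ 2 * C + 6 * M * C + 2 * C) * K := fun v θ hθ =>
    hbound _ _ _ _ θ (hC [0, 1] (by simp) v M hM θ hθ 0) (hC [1, 1] (by simp) v M hM θ hθ 0)
      (hC [1] (by simp) v M hM θ hθ 0) (hC [] (by simp) v M hM θ hθ 0) hθ
  have hFvb : ∀ v, ∀ θ ∈ Ioo (0:ℝ) π,
      |Fv v θ| ≤ (M ^ 2 * C + 4 * M ^ 2 * C + 6 * M * C + 2 * C) * K := fun v θ hθ =>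
    hbound _ _ _ _ θ (hC [0, 0, 1] (by simp) v M hM θ hθ 0)
      (hC [0, 1, 1] (by simp) v M hM θ hθ 0)
      (hC [0, 1] (by simp) v M hM θ hθ 0) (hC [0] (by simp) v M hM θ hθ 0) hθ
  have hFd : ∀ v, ∀ θ ∈ Ioo (0:ℝ) π, HasDerivAt (fun w => F w θ) (Fv v θ) v := by
    intro v θ hθ
    have hp : (v, M, θ, (0 : ℝ)) ∈ kerrDom := mem_kerrDom hM hθ
    exact (((((((hs.pder 1).pder 0).hasDerivAt0 hp).const_mul (M ^ 2 * sin θ ^ 2)).add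
      ((((hs.pder 1).pder 1).hasDerivAt0 hp).const_mul (4 * M ^ 2))).add
      (((hs.pder 1).hasDerivAt0 hp).const_mul (6 * M))).add
      ((hs.hasDerivAt0 hp).const_mul 2)).mul_const (E₁ θ) |>.mul_const (sin θ)
  -- `Fv v` is the `θ`-derivative of the flux `ψ_r sin θ E₁' - ψ_{rθ} sin θ E₁`.
  have hzero : ∀ v, ∫ θ in Ioo 0 π, Fv v θ = 0 := by
    intro v
    refine integral_deriv_eq_zero (C := 2 * C * K)
      (W := fun θ => pder 1 ψ v M θ 0 * (sin θ * deriv E₁ θ)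
        - pder 2 (pder 1 ψ) v M θ 0 * (sin θ * E₁ θ)) ?_ ?_ (hFvc v) (hFvb v)
    · intro θ hθ
      have hp : (v, M, θ, (0 : ℝ)) ∈ kerrDom := mem_kerrDom hM hθ
      have hd := (((hs.pder 1).hasDerivAt2 hp).mul (hEd2 θ hθ)).sub
        ((((hs.pder 1).pder 2).hasDerivAt2 hp).mul ((hasDerivAt_sin θ).mul (hEd θ hθ)))
      refine hd.congr_deriv ?_
      have hw := wave_deriv_horizon hM hψ haxi v hθ
      simp only [hFv, Pi.mul_apply]
      linear_combination -E₁ θ * hw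
    · intro θ hθ
      have hs0 : 0 < sin θ := sin_pos_of_mem_Ioo hθ
      have h1 : |pder 1 ψ v M θ 0| ≤ C := hC [1] (by simp) v M hM θ hθ 0
      have h2 : |pder 2 (pder 1 ψ) v M θ 0| ≤ C := hC [2, 1] (by simp) v M hM θ hθ 0
      have hC0 : 0 ≤ C := (abs_nonneg _).trans h1
      obtain ⟨h3, h4⟩ := hK θ hθ
      refine (abs_sub _ _).trans ?_
      rw [abs_mul, abs_mul, abs_mul, abs_mul, abs_of_pos hs0]
      calc _ ≤ C * (sin θ * K) + C * (sin θ * K) := by gcongr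
        _ = _ := by ring
  have hderiv : ∀ v, HasDerivAt (fun w => ∫ θ in Ioo 0 π, F w θ) 0 v := by
    intro v
    refine HasDerivAt.congr_deriv (hasDerivAt_integral_of_dominated_loc_of_deriv_le
      (μ := MeasureTheory.volume.restrict (Ioo 0 π)) (F := F) (F' := Fv)
      (bound := fun _ => (M ^ 2 * C + 4 * M ^ 2 * C + 6 * M * C + 2 * C) * K)
      (s := univ) Filter.univ_mem ?_ ?_ ?_ ?_ ?_ ?_).2 (hzero v)
    · exact .of_forall fun w => (hFc w).aestronglyMeasurable measurableSet_Ioo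
    · exact integrableOn_Ioo_of_bound (hFc v) (hFb v)
    · exact (hFvc v).aestronglyMeasurable measurableSet_Ioo
    · exact (MeasureTheory.ae_restrict_iff' measurableSet_Ioo).2
        (.of_forall fun θ hθ w _ => hFvb w θ hθ)
    · exact MeasureTheory.integrable_const _
    · exact (MeasureTheory.ae_restrict_iff' measurableSet_Ioo).2
        (.of_forall fun θ hθ w _ => hFd w θ hθ)
  intro v₁ v₂
  rw [intervalIntegral.integral_of_le pi_pos.le, intervalIntegral.integral_of_le pi_pos.le,
    MeasureTheory.integral_Ioc_eq_integral_Ioo, MeasureTheory.integral_Ioc_eq_integral_Ioo]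
  exact is_const_of_deriv_eq_zero (fun v => (hderiv v).differentiableAt)
    (fun v => (hderiv v).deriv) v₁ v₂
end
end
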